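/- arXiv:1705.05934 — 3 statements merged into one kernel-verified Lean document; each statement's English description precedes it below -/
import Mathlib

section
/- Let ψ be a hyperexponential Laplace exponent that is not identically zero (σ > 0, or a ≠ 0, or N + N̂ ≥ 1) and let q > 0. Write M = N+1 if σ > 0 or (σ = 0 and a > 0) and M = N otherwise, and M̂ = N̂+1 if σ > 0 or (σ = 0 and a < 0) and M̂ = N̂ otherwise. Then for every z ∈ ℂ that is not one of the solutions ζ_1(q), …, ζ_M(q), −ζ̂_1(q), …, −ζ̂_{M̂}(q) and not one of the poles ρ_1, …, ρ_N, −ρ̂_1, …, −ρ̂_N̂, the partial fraction identity q/(q − ψ(z)) = qα − ∑_{ℓ=1}^{M} q/(ψ′(ζ_ℓ(q))·(z − ζ_ℓ(q))) − ∑_{ℓ=1}^{M̂} q/(ψ′(−ζ̂_ℓ(q))·(z + ζ̂_ℓ(q))) holds, where α = 1/(q + ∑_{ℓ=1}^N a_ℓ + ∑_{ℓ=1}^{N̂} â_ℓ) if σ = 0 and a = 0, and α = 0 otherwise. -/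
/-- The Laplace exponent of a hyperexponential Lévy process, extended to a rational
function on `ℂ`. -/
noncomputable def psi (σ A : ℝ) (N Nh : ℕ) (aa ρ ah ρh : ℕ → ℝ) (z : ℂ) : ℂ :=
  (σ : ℂ) ^ 2 * z ^ 2 / 2 + (A : ℂ) * z
    + z * ∑ ℓ ∈ Finset.Icc 1 N, (aa ℓ : ℂ) / ((ρ ℓ : ℂ) - z)
    - z * ∑ ℓ ∈ Finset.Icc 1 Nh, (ah ℓ : ℂ) / ((ρh ℓ : ℂ) + z)

/-!
Over the common denominator `Q` of its poles, `q - ψ` is a quotient `P / Q` of polynomials with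
`deg Q ≤ deg P = N + N̂ + d`, where `d` is the degree of its polynomial part. Interlacing supplies
exactly `deg P` distinct zeros, so `P` splits with simple roots, and Lagrange interpolation at these
roots expands `Q / P`; the residue `Q / P'` at a root of `P` is the reciprocal of the derivative of
`P / Q` there, that is, `-1 / ψ'`. The constant term is the limit of `Q / P` at infinity, which is
nonzero only if `d = 0`.
-/

open Polynomial

theorem eq_C_leadingCoeff_mul_nodal {R ι : Type*} [CommRing R] [IsDomain R] {t : Finset ι}
    {r : ι → R} {P : R[X]} (hr : Set.InjOn r t) (hP : P.degree = t.card)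
    (hroot : ∀ j ∈ t, P.eval (r j) = 0) :
    P = C P.leadingCoeff * Lagrange.nodal t r := by
  have hP0 : P ≠ 0 := by
    rintro rfl
    simp at hP
  have hlc : P.leadingCoeff ≠ 0 := leadingCoeff_ne_zero.mpr hP0
  refine sub_eq_zero.mp (eq_zero_of_degree_lt_of_eval_index_eq_zero t hr ?_ fun j hj => ?_)
  · rw [← hP]
    refine degree_sub_lt_left ?_ hP0 ?_
    · rw [degree_C_mul hlc, Lagrange.degree_nodal, hP]
    · rw [leadingCoeff_mul, leadingCoeff_C, Lagrange.nodal_monic.leadingCoeff, mul_one]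
  · rw [eval_sub, hroot j hj, eval_mul, Lagrange.eval_nodal_at_node hj, mul_zero, sub_zero]

section PartialFractions

variable {K ι : Type*} [Field K] {t : Finset ι} {r : ι → K} {P Q : K[X]}

theorem eval_derivative_eq_leadingCoeff_mul_nodalWeight_inv [DecidableEq ι]
    (hr : Set.InjOn r t) (hP : P.degree = t.card) (hroot : ∀ j ∈ t, P.eval (r j) = 0) {j : ι}
    (hj : j ∈ t) :
    P.derivative.eval (r j) = P.leadingCoeff * (Lagrange.nodalWeight t r j)⁻¹ := by
  rw [Lagrange.nodalWeight_eq_eval_derivative_nodal hj, inv_inv]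
  conv_lhs => rw [eq_C_leadingCoeff_mul_nodal hr hP hroot, derivative_C_mul, eval_C_mul]

theorem degree_sub_C_coeff_div_leadingCoeff_mul_lt {n : ℕ} (hP : P.degree = n)
    (hQ : Q.degree ≤ n) : (Q - C (Q.coeff n / P.leadingCoeff) * P).degree < n := by
  have hlc : P.coeff n ≠ 0 := coeff_ne_zero_of_eq_degree hP
  rw [degree_lt_iff_coeff_zero]
  intro m hm
  rw [coeff_sub, coeff_C_mul, leadingCoeff, natDegree_eq_of_degree_eq_some hP]
  rcases hm.eq_or_lt with rfl | hnm
  · rw [div_mul_cancel₀ _ hlc, sub_self]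
  · have hnm' : (n : WithBot ℕ) < m := by exact_mod_cast hnm
    rw [coeff_eq_zero_of_degree_lt (hQ.trans_lt hnm'),
      coeff_eq_zero_of_degree_lt (hP.trans_lt hnm'), mul_zero, sub_zero]

theorem eval_div_eval_eq_coeff_div_leadingCoeff_add_sum (hr : Set.InjOn r t)
    (hP : P.degree = t.card) (hQ : Q.degree ≤ t.card) (hroot : ∀ j ∈ t, P.eval (r j) = 0)
    {z : K} (hz : ∀ j ∈ t, z ≠ r j) :
    Q.eval z / P.eval z = Q.coeff t.card / P.leadingCoeff +
      ∑ j ∈ t, Q.eval (r j) / (P.derivative.eval (r j) * (z - r j)) := by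
  classical
  set α := Q.coeff t.card / P.leadingCoeff
  have hlc : P.leadingCoeff ≠ 0 := by
    rw [leadingCoeff, natDegree_eq_of_degree_eq_some hP]
    exact coeff_ne_zero_of_eq_degree hP
  have heval : P.eval z = P.leadingCoeff * (Lagrange.nodal t r).eval z := by
    conv_lhs => rw [eq_C_leadingCoeff_mul_nodal hr hP hroot, eval_C_mul]
  have hnodal : (Lagrange.nodal t r).eval z ≠ 0 := Lagrange.eval_nodal_not_at_node hz
  have hinterp : Q - C α * P = Lagrange.interpolate t r fun j => Q.eval (r j) :=
    Lagrange.eq_interpolate_of_eval_eq _ hr (degree_sub_C_coeff_div_leadingCoeff_mul_lt hP hQ)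
      fun j hj => by rw [eval_sub, eval_C_mul, hroot j hj, mul_zero, sub_zero]
  have hQz : Q.eval z - α * P.eval z = (Lagrange.nodal t r).eval z *
      ∑ j ∈ t, Lagrange.nodalWeight t r j * (z - r j)⁻¹ * Q.eval (r j) := by
    rw [← Lagrange.eval_interpolate_not_at_node _ hz, ← hinterp, eval_sub, eval_C_mul]
  have hPz : P.eval z ≠ 0 := heval ▸ mul_ne_zero hlc hnodal
  rw [div_eq_iff hPz, add_mul, ← sub_eq_iff_eq_add', hQz, heval, Finset.mul_sum,
    Finset.sum_mul]
  refine Finset.sum_congr rfl fun j hj => ?_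
  rw [eval_derivative_eq_leadingCoeff_mul_nodalWeight_inv hr hP hroot hj]
  have hzj := sub_ne_zero.mpr (hz j hj)
  have hw := Lagrange.nodalWeight_ne_zero hr hj
  field_simp

end PartialFractions

section Reciprocal

variable {𝕜 ι : Type*} [NontriviallyNormedField 𝕜]

theorem deriv_eval_div_eval_of_eval_eq_zero {P Q : 𝕜[X]} {x : 𝕜} (hP : P.eval x = 0)
    (hQ : Q.eval x ≠ 0) :
    deriv (fun y => P.eval y / Q.eval y) x = P.derivative.eval x / Q.eval x := by
  rw [((P.hasDerivAt x).fun_div (Q.hasDerivAt x) hQ).deriv, hP]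
  field_simp
  ring

theorem one_div_eq_coeff_div_leadingCoeff_add_sum {t : Finset ι} {r : ι → 𝕜} {P Q : 𝕜[X]}
    {f : 𝕜 → 𝕜} (hr : Set.InjOn r t) (hP : P.degree = t.card) (hQ : Q.degree ≤ t.card)
    (hf : ∀ x, Q.eval x ≠ 0 → f x = P.eval x / Q.eval x) (hQr : ∀ j ∈ t, Q.eval (r j) ≠ 0)
    (hfr : ∀ j ∈ t, f (r j) = 0) {z : 𝕜} (hz : ∀ j ∈ t, z ≠ r j) (hQz : Q.eval z ≠ 0) :
    1 / f z = Q.coeff t.card / P.leadingCoeff + ∑ j ∈ t, 1 / (deriv f (r j) * (z - r j)) := by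
  have hroot : ∀ j ∈ t, P.eval (r j) = 0 := fun j hj =>
    (div_eq_zero_iff.mp ((hf _ (hQr j hj)).symm.trans (hfr j hj))).resolve_right (hQr j hj)
  have hderiv : ∀ j ∈ t, deriv f (r j) = P.derivative.eval (r j) / Q.eval (r j) := by
    intro j hj
    have hnear : f =ᶠ[nhds (r j)] fun x => P.eval x / Q.eval x :=
      (Q.continuous.continuousAt.eventually_ne (hQr j hj)).mono hf
    rw [hnear.deriv_eq, deriv_eval_div_eval_of_eval_eq_zero (hroot j hj) (hQr j hj)]
  rw [hf z hQz, one_div_div, eval_div_eval_eq_coeff_div_leadingCoeff_add_sum hr hP hQ hroot hz]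
  congr 1
  refine Finset.sum_congr rfl fun j hj => ?_
  rw [hderiv j hj, div_mul_eq_mul_div, one_div_div]

end Reciprocal

theorem coeff_nodal_card_add {R κ : Type*} [CommRing R] [Nontrivial R] {s : Finset κ}
    {p : κ → R} (n : ℕ) :
    (Lagrange.nodal s p).coeff (s.card + n) = if n = 0 then 1 else 0 := by
  split_ifs with hn
  · rw [hn, add_zero, ← Lagrange.natDegree_nodal (s := s) (v := p)]
    exact Lagrange.nodal_monic.coeff_natDegree
  · refine coeff_eq_zero_of_natDegree_lt ?_
    rw [Lagrange.natDegree_nodal]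
    exact Nat.lt_add_of_pos_right (Nat.pos_of_ne_zero hn)

section PoleNumerator

variable {R K κ : Type*} [CommRing R] [Field K] [DecidableEq κ]

/-- The numerator of `B + ∑ i ∈ s, w i / (X - p i)` over the common denominator
`Lagrange.nodal s p`. -/
noncomputable def poleNumerator (s : Finset κ) (p w : κ → R) (B : R[X]) : R[X] :=
  B * Lagrange.nodal s p + ∑ i ∈ s, C (w i) * Lagrange.nodal (s.erase i) p

variable {s : Finset κ}

theorem eval_poleNumerator {p w : κ → K} {B : K[X]} {z : K} (hz : ∀ i ∈ s, z ≠ p i) :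
    (poleNumerator s p w B).eval z =
      (B.eval z + ∑ i ∈ s, w i / (z - p i)) * (Lagrange.nodal s p).eval z := by
  rw [poleNumerator, eval_add, eval_mul, eval_finsetSum, add_mul, Finset.sum_mul]
  congr 1
  refine Finset.sum_congr rfl fun i hi => ?_
  have hzi := sub_ne_zero.mpr (hz i hi)
  rw [Lagrange.nodal_eq_mul_nodal_erase hi]
  simp only [eval_mul, eval_sub, eval_X, eval_C]
  field_simp

variable [Nontrivial R] {p w : κ → R} {B : R[X]}

theorem degree_sum_C_mul_nodal_erase_lt :
    (∑ i ∈ s, C (w i) * Lagrange.nodal (s.erase i) p).degree < s.card := by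
  refine (degree_sum_le _ _).trans_lt ((Finset.sup_lt_iff (WithBot.bot_lt_coe _)).mpr ?_)
  intro i hi
  calc (C (w i) * Lagrange.nodal (s.erase i) p).degree
      ≤ (Lagrange.nodal (s.erase i) p).degree := smul_eq_C_mul (w i) ▸ degree_smul_le _ _
    _ = (s.erase i).card := Lagrange.degree_nodal
    _ < s.card := by exact_mod_cast Finset.card_erase_lt_of_mem hi

theorem degree_sum_C_mul_nodal_erase_lt_degree_mul_nodal (hB : B ≠ 0) :
    (∑ i ∈ s, C (w i) * Lagrange.nodal (s.erase i) p).degree <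
      (B * Lagrange.nodal s p).degree := by
  refine degree_sum_C_mul_nodal_erase_lt.trans_le ?_
  rw [Lagrange.nodal_monic.degree_mul, Lagrange.degree_nodal, degree_eq_natDegree hB]
  exact_mod_cast Nat.le_add_left _ _

theorem degree_poleNumerator (hB : B ≠ 0) :
    (poleNumerator s p w B).degree = ↑(s.card + B.natDegree) := by
  rw [poleNumerator,
    degree_add_eq_left_of_degree_lt (degree_sum_C_mul_nodal_erase_lt_degree_mul_nodal hB),
    Lagrange.nodal_monic.degree_mul, Lagrange.degree_nodal, degree_eq_natDegree hB, add_comm,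
    Nat.cast_add]

theorem leadingCoeff_poleNumerator (hB : B ≠ 0) :
    (poleNumerator s p w B).leadingCoeff = B.leadingCoeff := by
  rw [poleNumerator,
    leadingCoeff_add_of_degree_lt' (degree_sum_C_mul_nodal_erase_lt_degree_mul_nodal hB),
    leadingCoeff_mul_monic Lagrange.nodal_monic]

end PoleNumerator

theorem one_div_eq_of_eq_eval_add_sum_div {𝕜 ι κ : Type*} [NontriviallyNormedField 𝕜]
    {s : Finset κ} {p w : κ → 𝕜} {t : Finset ι} {r : ι → 𝕜} {B : 𝕜[X]} {f : 𝕜 → 𝕜}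
    (hr : Set.InjOn r t) (hB : B ≠ 0) (hcard : t.card = s.card + B.natDegree)
    (hf : ∀ x, (∀ i ∈ s, x ≠ p i) → f x = B.eval x + ∑ i ∈ s, w i / (x - p i))
    (hrp : ∀ j ∈ t, ∀ i ∈ s, r j ≠ p i) (hfr : ∀ j ∈ t, f (r j) = 0)
    {z : 𝕜} (hz : ∀ j ∈ t, z ≠ r j) (hzp : ∀ i ∈ s, z ≠ p i) :
    1 / f z = (if B.natDegree = 0 then 1 / B.leadingCoeff else 0) +
      ∑ j ∈ t, 1 / (deriv f (r j) * (z - r j)) := by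
  classical
  have hne : ∀ x, (Lagrange.nodal s p).eval x ≠ 0 → ∀ i ∈ s, x ≠ p i := by
    rintro _ hx i hi rfl
    exact hx (Lagrange.eval_nodal_at_node hi)
  have hconst : (Lagrange.nodal s p).coeff t.card / (poleNumerator s p w B).leadingCoeff =
      if B.natDegree = 0 then 1 / B.leadingCoeff else 0 := by
    rw [hcard, coeff_nodal_card_add, leadingCoeff_poleNumerator hB, ite_div, zero_div]
  rw [← hconst]
  refine one_div_eq_coeff_div_leadingCoeff_add_sum hr ?_ ?_ (fun x hx => ?_)
    (fun j hj => Lagrange.eval_nodal_not_at_node (hrp j hj)) hfr hz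
    (Lagrange.eval_nodal_not_at_node hzp)
  · rw [degree_poleNumerator hB, hcard]
  · rw [Lagrange.degree_nodal, hcard]
    exact_mod_cast Nat.le_add_right _ _
  · rw [eval_poleNumerator (hne x hx), mul_div_cancel_right₀ _ hx, hf x (hne x hx)]

section TwoSided

variable {ι κ : Type*}

/-- The family consisting of the points `u i` followed by the points `-v j`. Both the poles
(`u = ρ`, `v = ρ̂`) and the solutions of `ψ = q` (`u = ζ`, `v = ζ̂`) have this form. -/
def twoSided (u : ι → ℝ) (v : κ → ℝ) : ι ⊕ κ → ℂ :=
  Sum.elim (fun i => (u i : ℂ)) fun j => -(v j : ℂ)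

theorem liftRel_of_twoSided_eq {s s' : Finset ι} {t t' : Finset κ} {u u' : ι → ℝ} {v v' : κ → ℝ}
    (hu : ∀ i ∈ s, 0 < u i) (hv : ∀ j ∈ t, 0 < v j) (hu' : ∀ i ∈ s', 0 < u' i)
    (hv' : ∀ j ∈ t', 0 < v' j) {x y : ι ⊕ κ} (hx : x ∈ s.disjSum t) (hy : y ∈ s'.disjSum t')
    (hxy : twoSided u v x = twoSided u' v' y) :
    Sum.LiftRel (fun i i' => u i = u' i') (fun j j' => v j = v' j') x y := by
  rcases x with i | j <;> rcases y with i' | j' <;>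
    simp only [Finset.inl_mem_disjSum, Finset.inr_mem_disjSum] at hx hy <;>
    simp only [twoSided, Sum.elim_inl, Sum.elim_inr] at hxy <;> norm_cast at hxy
  · exact .inl hxy
  · linarith [hu i hx, hv' j' hy]
  · linarith [hv j hx, hu' i' hy]
  · exact .inr (neg_injective hxy)

end TwoSided

/-- The points `ζ 1, …, ζ M` interlace with `0 = ρ 0 < ρ 1 < ⋯ < ρ N`: each `ζ i` lies in
`(ρ (i - 1), ρ i)`, where the right endpoint is replaced by `∞` for `i = N + 1`. -/
structure Interlaces (N M : ℕ) (ρ ζ : ℕ → ℝ) : Prop where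
  zero : ρ 0 = 0
  strictMonoOn : StrictMonoOn ρ (Set.Iic N)
  le_succ : M ≤ N + 1
  left_lt : ∀ i ∈ Finset.Icc 1 M, ρ (i - 1) < ζ i
  lt_right : ∀ i ∈ Finset.Icc 1 M, i ≤ N → ζ i < ρ i

namespace Interlaces

variable {N M N' M' : ℕ} {ρ ζ ρ' ζ' : ℕ → ℝ}

theorem pole_pos (h : Interlaces N M ρ ζ) : ∀ i ∈ Finset.Icc 1 N, 0 < ρ i := by
  intro i hi
  obtain ⟨hi1, hiN⟩ := Finset.mem_Icc.mp hi
  rw [← h.zero]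
  exact h.strictMonoOn (Set.mem_Iic.mpr N.zero_le) hiN hi1

theorem pole_lt_root (h : Interlaces N M ρ ζ) {i j : ℕ} (hj : j ∈ Finset.Icc 1 M) (hij : i < j) :
    ρ i < ζ j := by
  have hjM := (Finset.mem_Icc.mp hj).2
  have hMN := h.le_succ
  have hi : i ∈ Set.Iic N := by rw [Set.mem_Iic]; omega
  have hj' : j - 1 ∈ Set.Iic N := by rw [Set.mem_Iic]; omega
  exact (h.strictMonoOn.monotoneOn hi hj' (by omega)).trans_lt (h.left_lt j hj)

theorem root_pos (h : Interlaces N M ρ ζ) : ∀ i ∈ Finset.Icc 1 M, 0 < ζ i := fun _ hi =>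
  h.zero ▸ h.pole_lt_root hi (Finset.mem_Icc.mp hi).1

theorem root_injOn (h : Interlaces N M ρ ζ) : Set.InjOn ζ (Finset.Icc 1 M) := by
  refine StrictMonoOn.injOn fun i hi j hj hij => ?_
  have hjM := (Finset.mem_Icc.mp hj).2
  have hMN := h.le_succ
  exact (h.lt_right i hi (by omega)).trans (h.pole_lt_root hj hij)

theorem root_ne_pole (h : Interlaces N M ρ ζ) {i j : ℕ} (hi : i ∈ Finset.Icc 1 M)
    (hj : j ∈ Finset.Icc 1 N) : ζ i ≠ ρ j := by
  have hjN := (Finset.mem_Icc.mp hj).2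
  rcases lt_or_ge j i with hji | hij
  · exact (h.pole_lt_root hi hji).ne'
  · have hiN := hij.trans hjN
    exact ((h.lt_right i hi hiN).trans_le (h.strictMonoOn.monotoneOn hiN hjN hij)).ne

theorem twoSided_root_injOn (h : Interlaces N M ρ ζ) (h' : Interlaces N' M' ρ' ζ') :
    Set.InjOn (twoSided ζ ζ') ((Finset.Icc 1 M).disjSum (Finset.Icc 1 M')) := by
  intro x hx y hy hxy
  rw [Finset.mem_coe] at hx hy
  cases liftRel_of_twoSided_eq h.root_pos h'.root_pos h.root_pos h'.root_pos hx hy hxy with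
  | inl hζ => rw [h.root_injOn (Finset.inl_mem_disjSum.mp hx) (Finset.inl_mem_disjSum.mp hy) hζ]
  | inr hζ => rw [h'.root_injOn (Finset.inr_mem_disjSum.mp hx) (Finset.inr_mem_disjSum.mp hy) hζ]

theorem twoSided_root_ne_pole (h : Interlaces N M ρ ζ) (h' : Interlaces N' M' ρ' ζ') :
    ∀ x ∈ (Finset.Icc 1 M).disjSum (Finset.Icc 1 M'),
      ∀ y ∈ (Finset.Icc 1 N).disjSum (Finset.Icc 1 N'), twoSided ζ ζ' x ≠ twoSided ρ ρ' y := by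
  intro x hx y hy hxy
  cases liftRel_of_twoSided_eq h.root_pos h'.root_pos h.pole_pos h'.pole_pos hx hy hxy with
  | inl hζ =>
    exact h.root_ne_pole (Finset.inl_mem_disjSum.mp hx) (Finset.inl_mem_disjSum.mp hy) hζ
  | inr hζ =>
    exact h'.root_ne_pole (Finset.inr_mem_disjSum.mp hx) (Finset.inr_mem_disjSum.mp hy) hζ

end Interlaces

theorem forall_mem_disjSum {ι κ : Type*} {s : Finset ι} {t : Finset κ} {p : ι ⊕ κ → Prop}
    (hs : ∀ i ∈ s, p (.inl i)) (ht : ∀ j ∈ t, p (.inr j)) : ∀ x ∈ s.disjSum t, p x := by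
  rintro (i | j) hx
  · exact hs i (Finset.inl_mem_disjSum.mp hx)
  · exact ht j (Finset.inr_mem_disjSum.mp hx)

theorem forall_mem_Icc_ite_succ {c : Prop} [Decidable c] {N : ℕ} {p : ℕ → Prop}
    (h : ∀ i ∈ Finset.Icc 1 N, p i) (hc : c → p (N + 1)) :
    ∀ i ∈ Finset.Icc 1 (if c then N + 1 else N), p i := by
  split_ifs with hc'
  · rw [← Finset.insert_Icc_right_eq_Icc_add_one (by omega), Finset.forall_mem_insert]
    exact ⟨hc hc', h⟩
  · exact h

theorem interlaces_ite_succ {c : Prop} [Decidable c] {N : ℕ} {ρ ζ : ℕ → ℝ} (hρ0 : ρ 0 = 0)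
    (hmono : ∀ i j, i < j → j ≤ N → ρ i < ρ j)
    (hζ : ∀ i ∈ Finset.Icc 1 N, ζ i ∈ Set.Ioo (ρ (i - 1)) (ρ i)) (hc : c → ρ N < ζ (N + 1)) :
    Interlaces N (if c then N + 1 else N) ρ ζ where
  zero := hρ0
  strictMonoOn _ _ _ hj hij := hmono _ _ hij hj
  le_succ := by split_ifs <;> omega
  left_lt := forall_mem_Icc_ite_succ (fun i hi => (hζ i hi).1) hc
  lt_right i hi hiN := (hζ i (Finset.mem_Icc.mpr ⟨(Finset.mem_Icc.mp hi).1, hiN⟩)).2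

/-- The polynomial part `c - A z - σ² z² / 2` of `q - ψ`, for `c = q + ∑ a_ℓ + ∑ â_ℓ`. -/
noncomputable def psiPolynomialPart (σ A c : ℝ) : ℂ[X] :=
  C (-(σ : ℂ) ^ 2 / 2) * X ^ 2 + C (-(A : ℂ)) * X + C (c : ℂ)

theorem natDegree_psiPolynomialPart (σ A c : ℝ) :
    (psiPolynomialPart σ A c).natDegree = if σ = 0 then if A = 0 then 0 else 1 else 2 := by
  split_ifs with hσ hA
  · simp [psiPolynomialPart, hσ, hA]
  · have hlinear : psiPolynomialPart σ A c = C (-(A : ℂ)) * X + C (c : ℂ) := by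
      simp [psiPolynomialPart, hσ]
    rw [hlinear, natDegree_linear (by simpa using hA)]
  · exact natDegree_quadratic (by simpa using hσ)

theorem psiPolynomialPart_ne_zero (σ A : ℝ) {c : ℝ} (hc : c ≠ 0) :
    psiPolynomialPart σ A c ≠ 0 := by
  intro h
  have hcoeff : (psiPolynomialPart σ A c).coeff 0 = c := by simp [psiPolynomialPart]
  rw [h, coeff_zero] at hcoeff
  exact hc (by exact_mod_cast hcoeff.symm)

theorem ite_natDegree_psiPolynomialPart (σ A c : ℝ) :
    (if (psiPolynomialPart σ A c).natDegree = 0 then 1 / (psiPolynomialPart σ A c).leadingCoeff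
      else 0) = if σ = 0 ∧ A = 0 then ((1 / c : ℝ) : ℂ) else 0 := by
  rw [natDegree_psiPolynomialPart]
  by_cases hσ : σ = 0 <;> by_cases hA : A = 0 <;> simp [hσ, hA, psiPolynomialPart]

theorem ite_succ_add_ite_succ {σ : ℝ} (hσ : 0 ≤ σ) (A : ℝ) (N Nh : ℕ) :
    (if 0 < σ ∨ (σ = 0 ∧ 0 < A) then N + 1 else N) +
        (if 0 < σ ∨ (σ = 0 ∧ A < 0) then Nh + 1 else Nh) =
      N + Nh + if σ = 0 then if A = 0 then 0 else 1 else 2 := by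
  rcases hσ.eq_or_lt with rfl | hσ
  · rcases lt_trichotomy A 0 with hA | rfl | hA
    · simp [hA, hA.not_gt, hA.ne, add_assoc]
    · simp
    · simp [hA, hA.not_gt, hA.ne', add_right_comm]
  · simp only [hσ, hσ.ne', true_or, if_true, if_false]
    omega

section Psi

variable {σ A : ℝ} {N Nh : ℕ} {aa ρ ah ρh : ℕ → ℝ}

theorem psi_eq_sub_mul_sum (z : ℂ) :
    psi σ A N Nh aa ρ ah ρh z = (σ : ℂ) ^ 2 * z ^ 2 / 2 + A * z -
      z * ∑ i ∈ (Finset.Icc 1 N).disjSum (Finset.Icc 1 Nh),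
        ((Sum.elim aa ah i : ℝ) : ℂ) / (z - twoSided ρ ρh i) := by
  have hright (ℓ : ℕ) : (aa ℓ : ℂ) / (ρ ℓ - z) = -(aa ℓ / (z - ρ ℓ)) := by
    rw [← neg_sub, div_neg]
  simp only [psi, twoSided, Finset.sum_disjSum, Sum.elim_inl, Sum.elim_inr, hright,
    Finset.sum_neg_distrib, sub_neg_eq_add, add_comm (Complex.ofReal (ρh _)) z]
  ring

theorem sub_psi_eq_eval_add_sum (q : ℝ) {z : ℂ}
    (hz : ∀ i ∈ (Finset.Icc 1 N).disjSum (Finset.Icc 1 Nh), z ≠ twoSided ρ ρh i) :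
    q - psi σ A N Nh aa ρ ah ρh z =
      (psiPolynomialPart σ A
        (q + (∑ ℓ ∈ Finset.Icc 1 N, aa ℓ) + ∑ ℓ ∈ Finset.Icc 1 Nh, ah ℓ)).eval z +
      ∑ i ∈ (Finset.Icc 1 N).disjSum (Finset.Icc 1 Nh),
        (Sum.elim aa ah i : ℝ) * twoSided ρ ρh i / (z - twoSided ρ ρh i) := by
  have hsplit : z * ∑ i ∈ (Finset.Icc 1 N).disjSum (Finset.Icc 1 Nh),
        ((Sum.elim aa ah i : ℝ) : ℂ) / (z - twoSided ρ ρh i) =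
      ∑ i ∈ (Finset.Icc 1 N).disjSum (Finset.Icc 1 Nh), ((Sum.elim aa ah i : ℝ) : ℂ) +
      ∑ i ∈ (Finset.Icc 1 N).disjSum (Finset.Icc 1 Nh),
        (Sum.elim aa ah i : ℝ) * twoSided ρ ρh i / (z - twoSided ρ ρh i) := by
    rw [Finset.mul_sum, ← Finset.sum_add_distrib]
    refine Finset.sum_congr rfl fun i hi => ?_
    have hzi := sub_ne_zero.mpr (hz i hi)
    field_simp
    ring
  rw [psi_eq_sub_mul_sum, hsplit, Finset.sum_disjSum]
  simp only [psiPolynomialPart, Sum.elim_inl, Sum.elim_inr, eval_add, eval_mul, eval_C, eval_pow,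
    eval_X, Complex.ofReal_add, Complex.ofReal_sum]
  ring

theorem one_div_sub_psi_eq_sub_sum {ι : Type*} {t : Finset ι} {r : ι → ℂ} {q : ℝ}
    (hmass : q + (∑ ℓ ∈ Finset.Icc 1 N, aa ℓ) + ∑ ℓ ∈ Finset.Icc 1 Nh, ah ℓ ≠ 0)
    (hr : Set.InjOn r t)
    (hcard : t.card = N + Nh + if σ = 0 then if A = 0 then 0 else 1 else 2)
    (hrp : ∀ j ∈ t, ∀ i ∈ (Finset.Icc 1 N).disjSum (Finset.Icc 1 Nh), r j ≠ twoSided ρ ρh i)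
    (hroot : ∀ j ∈ t, psi σ A N Nh aa ρ ah ρh (r j) = q) {z : ℂ} (hz : ∀ j ∈ t, z ≠ r j)
    (hzp : ∀ i ∈ (Finset.Icc 1 N).disjSum (Finset.Icc 1 Nh), z ≠ twoSided ρ ρh i) :
    1 / (q - psi σ A N Nh aa ρ ah ρh z) =
      (if σ = 0 ∧ A = 0 then
        ((1 / (q + (∑ ℓ ∈ Finset.Icc 1 N, aa ℓ) + ∑ ℓ ∈ Finset.Icc 1 Nh, ah ℓ) : ℝ) : ℂ)
      else 0) -
      ∑ j ∈ t, 1 / (deriv (psi σ A N Nh aa ρ ah ρh) (r j) * (z - r j)) := by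
  have hpf := one_div_eq_of_eq_eval_add_sum_div (f := fun x => q - psi σ A N Nh aa ρ ah ρh x)
    hr (psiPolynomialPart_ne_zero σ A hmass)
    (by simpa [natDegree_psiPolynomialPart] using hcard)
    (fun x hx => sub_psi_eq_eval_add_sum q hx) hrp
    (fun j hj => sub_eq_zero.mpr (hroot j hj).symm) hz hzp
  simpa only [ite_natDegree_psiPolynomialPart, deriv_const_sub, neg_mul, div_neg,
    Finset.sum_neg_distrib, ← sub_eq_add_neg] using hpf

end Psi

/-- Partial fraction decomposition of `q/(q - ψ(z))` in terms of the solutions of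
`ψ = q` (with multiplicities `M = N+1` or `N`, `M̂ = N̂+1` or `N̂` depending on `σ, a`). -/
theorem partial_fraction_decomposition
    (σ A : ℝ) (N Nh : ℕ) (aa ρ ah ρh : ℕ → ℝ)
    (hσ : 0 ≤ σ)
    (hpos : ∀ ℓ ∈ Finset.Icc 1 N, 0 < aa ℓ)
    (hposh : ∀ ℓ ∈ Finset.Icc 1 Nh, 0 < ah ℓ)
    (hρ0 : ρ 0 = 0) (hρh0 : ρh 0 = 0)
    (hmono : ∀ i j, i < j → j ≤ N → ρ i < ρ j)
    (hmonoh : ∀ i j, i < j → j ≤ Nh → ρh i < ρh j)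
    (hnondeg : 0 < σ ∨ A ≠ 0 ∨ 1 ≤ N + Nh)
    (q : ℝ) (hq : 0 < q)
    -- the solutions ζ_1, …, ζ_M and -ζ̂_1, …, -ζ̂_M̂ of ψ = q, as given by the
    -- interlacing property
    (ζ ζh : ℕ → ℝ)
    (hζ : ∀ ℓ ∈ Finset.Icc 1 N, ζ ℓ ∈ Set.Ioo (ρ (ℓ - 1)) (ρ ℓ) ∧
        psi σ A N Nh aa ρ ah ρh (ζ ℓ : ℂ) = (q : ℂ))
    (hζtop : (0 < σ ∨ (σ = 0 ∧ 0 < A)) → ρ N < ζ (N + 1) ∧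
        psi σ A N Nh aa ρ ah ρh (ζ (N + 1) : ℂ) = (q : ℂ))
    (hζh : ∀ ℓ ∈ Finset.Icc 1 Nh, -(ζh ℓ) ∈ Set.Ioo (-(ρh ℓ)) (-(ρh (ℓ - 1))) ∧
        psi σ A N Nh aa ρ ah ρh (-(ζh ℓ : ℝ) : ℂ) = (q : ℂ))
    (hζhtop : (0 < σ ∨ (σ = 0 ∧ A < 0)) → -(ζh (Nh + 1)) < -(ρh Nh) ∧
        psi σ A N Nh aa ρ ah ρh (-(ζh (Nh + 1) : ℝ) : ℂ) = (q : ℂ)) :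
    ∀ z : ℂ,
      (∀ ℓ ∈ Finset.Icc 1 (if 0 < σ ∨ (σ = 0 ∧ 0 < A) then N + 1 else N),
        z ≠ (ζ ℓ : ℂ)) →
      (∀ ℓ ∈ Finset.Icc 1 (if 0 < σ ∨ (σ = 0 ∧ A < 0) then Nh + 1 else Nh),
        z ≠ (-(ζh ℓ : ℝ) : ℂ)) →
      (∀ ℓ ∈ Finset.Icc 1 N, z ≠ (ρ ℓ : ℂ)) →
      (∀ ℓ ∈ Finset.Icc 1 Nh, z ≠ (-(ρh ℓ : ℝ) : ℂ)) →
      (q : ℂ) / ((q : ℂ) - psi σ A N Nh aa ρ ah ρh z)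
        = (q : ℂ) *
            (if σ = 0 ∧ A = 0 then
              ((1 / (q + (∑ ℓ ∈ Finset.Icc 1 N, aa ℓ) + ∑ ℓ ∈ Finset.Icc 1 Nh, ah ℓ) : ℝ) : ℂ)
            else 0)
          - (∑ ℓ ∈ Finset.Icc 1 (if 0 < σ ∨ (σ = 0 ∧ 0 < A) then N + 1 else N),
              (q : ℂ) / (deriv (psi σ A N Nh aa ρ ah ρh) (ζ ℓ : ℂ) * (z - (ζ ℓ : ℂ))))
          - ∑ ℓ ∈ Finset.Icc 1 (if 0 < σ ∨ (σ = 0 ∧ A < 0) then Nh + 1 else Nh),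
              (q : ℂ) / (deriv (psi σ A N Nh aa ρ ah ρh) (-(ζh ℓ : ℝ) : ℂ) * (z + (ζh ℓ : ℂ))) := by
  intro z hz hzh hzρ hzρh
  have hright := interlaces_ite_succ hρ0 hmono (fun ℓ hℓ => (hζ ℓ hℓ).1) fun h => (hζtop h).1
  have hleft := interlaces_ite_succ hρh0 hmonoh
    (fun ℓ hℓ => by simpa only [Set.mem_Ioo, neg_lt_neg_iff, and_comm] using (hζh ℓ hℓ).1)
    fun h => neg_lt_neg_iff.mp (hζhtop h).1
  have hroot := forall_mem_Icc_ite_succ (fun ℓ hℓ => (hζ ℓ hℓ).2) fun h => (hζtop h).2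
  have hrooth := forall_mem_Icc_ite_succ (fun ℓ hℓ => (hζh ℓ hℓ).2) fun h => (hζhtop h).2
  have hmass : 0 < q + (∑ ℓ ∈ Finset.Icc 1 N, aa ℓ) + ∑ ℓ ∈ Finset.Icc 1 Nh, ah ℓ :=
    add_pos_of_pos_of_nonneg
      (add_pos_of_pos_of_nonneg hq (Finset.sum_nonneg fun ℓ hℓ => (hpos ℓ hℓ).le))
      (Finset.sum_nonneg fun ℓ hℓ => (hposh ℓ hℓ).le)
  have hpf := one_div_sub_psi_eq_sub_sum hmass.ne' (hright.twoSided_root_injOn hleft)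
    (by simpa only [Finset.card_disjSum, Nat.card_Icc, Nat.add_sub_cancel] using
      ite_succ_add_ite_succ hσ A N Nh)
    (hright.twoSided_root_ne_pole hleft) (forall_mem_disjSum hroot hrooth)
    (forall_mem_disjSum hz hzh) (forall_mem_disjSum hzρ hzρh)
  rw [div_eq_mul_one_div, hpf, Finset.sum_disjSum]
  simp only [mul_sub, mul_add, Finset.mul_sum, mul_one_div, twoSided, Sum.elim_inl, Sum.elim_inr,
    sub_neg_eq_add, sub_add_eq_sub_sub]
end

section
/- Assume σ = 0 and a > 0. Then there exist R > 0 and a sequence (b_n)_{n≥−1} of real numbers with b_{−1} = 1/a such that the series ∑_{n=−1}^∞ b_n q^{−n} converges absolutely for every q ∈ ℂ with |q| > R, its sum z(q) satisfies ψ(z(q)) = q for every such q, and z(q) = ζ_{N+1}(q) for every real q > R. Analogously, if σ = 0 and a < 0, then there exist R > 0 and real (b_n)_{n≥−1} with b_{−1} = 1/a such that ∑_{n=−1}^∞ b_n q^{−n} converges absolutely for |q| > R, its sum satisfies ψ = q there, and for real q > R it equals −ζ̂_{N̂+1}(q). -/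
open Bornology Filter Topology
open scoped ComplexConjugate

section Reversion

variable {𝕜 : Type*} [NontriviallyNormedField 𝕜]

/-- The germs at `0` of `w ↦ w / h w` and `u ↦ u / m u` are inverse to each other. The relations
`(w / h w) / m (w / h w) = w` and `(u / m u) / h (u / m u) = u` are stated with `w` and `u`
cancelled, so that at the origin they still say `h 0 * m 0 = 1`. -/
structure IsReversionPair (h m : 𝕜 → 𝕜) : Prop where
  left : ∀ᶠ w in 𝓝 0, h w * m (w / h w) = 1
  right : ∀ᶠ u in 𝓝 0, m u * h (u / m u) = 1

namespace IsReversionPair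

variable {h m : 𝕜 → 𝕜}

lemma mul_apply_zero (hm : IsReversionPair h m) : h 0 * m 0 = 1 := by
  simpa using hm.left.self_of_nhds

lemma eventually_map_comm (hm : IsReversionPair h m) (hmc : ContinuousAt m 0)
    {τ : 𝕜 →+* 𝕜} (hτ : Continuous τ) (hh : ∀ᶠ w in 𝓝 0, h (τ w) = τ (h w)) :
    ∀ᶠ u in 𝓝 0, m (τ u) = τ (m u) := by
  have hdiv : Tendsto (fun u ↦ u / m u) (𝓝 0) (𝓝 0) := by
    simpa using! tendsto_id.div hmc (right_ne_zero_of_mul_eq_one hm.mul_apply_zero)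
  have hτ0 : Tendsto τ (𝓝 0) (𝓝 0) := by simpa using hτ.tendsto 0
  filter_upwards [hm.right, hdiv.eventually hh, (hτ0.comp hdiv).eventually hm.left]
    with u hu hτh hleft
  have hmu : τ (m u) ≠ 0 := (map_ne_zero τ).2 (left_ne_zero_of_mul_eq_one hu)
  have hval : h (τ (u / m u)) = (τ (m u))⁻¹ := by
    rw [hτh, eq_inv_of_mul_eq_one_right hu, map_inv₀]
  rw [Function.comp_apply, hval, map_div₀, div_inv_eq_mul, div_mul_cancel₀ _ hmu] at hleft
  exact ((inv_mul_eq_one₀ hmu).1 hleft).symm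

end IsReversionPair

lemma hasDerivAt_id_div_zero {h : 𝕜 → 𝕜} (hh : DifferentiableAt 𝕜 h 0) (h0 : h 0 ≠ 0) :
    HasDerivAt (fun w ↦ w / h w) (h 0)⁻¹ 0 := by
  refine ((hasDerivAt_id (0 : 𝕜)).div hh.hasDerivAt h0).congr_deriv ?_
  simp [pow_two]

variable [CompleteSpace 𝕜] [CharZero 𝕜]

lemma exists_analyticAt_localInverse {f : 𝕜 → 𝕜} {x : 𝕜} (hf : AnalyticAt 𝕜 f x)
    (hf' : deriv f x ≠ 0) :
    ∃ g : 𝕜 → 𝕜, AnalyticAt 𝕜 g (f x) ∧ g (f x) = x ∧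
      (∀ᶠ y in 𝓝 x, g (f y) = y) ∧ ∀ᶠ y in 𝓝 (f x), f (g y) = y :=
  ⟨_, hf.analyticAt_localInverse hf', HasStrictFDerivAt.localInverse_apply_image ..,
    hf.hasStrictDerivAt.eventually_left_inverse hf',
    hf.hasStrictDerivAt.eventually_right_inverse hf'⟩

lemma exists_isReversionPair {h : 𝕜 → 𝕜} (hh : AnalyticAt 𝕜 h 0) (h0 : h 0 ≠ 0) :
    ∃ m : 𝕜 → 𝕜, AnalyticAt 𝕜 m 0 ∧ IsReversionPair h m := by
  have hF : AnalyticAt 𝕜 (fun w ↦ w / h w) 0 := analyticAt_id.div hh h0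
  have hF' : HasDerivAt (fun w ↦ w / h w) (h 0)⁻¹ 0 :=
    hasDerivAt_id_div_zero hh.differentiableAt h0
  obtain ⟨g, hg, hg0, hleft, hright⟩ :=
    exists_analyticAt_localInverse hF (by simpa [hF'.deriv] using h0)
  simp only [zero_div] at hg hg0 hright
  have hg' : HasDerivAt g (h 0) 0 := by
    simpa using HasDerivAt.of_local_left_inverse hg.continuousAt (by simpa [hg0] using hF')
      (inv_ne_zero h0) hright
  set k := dslope g 0
  have hk : AnalyticAt 𝕜 k 0 :=
    let ⟨_, hp⟩ := hg
    hp.has_fpower_series_dslope_fslope.analyticAt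
  have hk0 : k 0 = h 0 := (dslope_same g 0).trans hg'.deriv
  have hgk (u : 𝕜) : g u = u * k u := by simpa using (sub_smul_dslope_of_zero hg0 u).symm
  -- With `m = k⁻¹`, the quotient `u / m u` is the local inverse `g u`.
  refine ⟨fun u ↦ (k u)⁻¹, hk.inv (hk0 ▸ h0), ?_, ?_⟩
  · filter_upwards [hleft, hh.continuousAt.eventually_ne h0] with w hw hhw
    rcases eq_or_ne w 0 with rfl | hw0
    · simp [hk0, h0]
    · have hkw : k (w / h w) = h w := by
        rw [hgk, div_mul_eq_mul_div, div_eq_iff hhw] at hw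
        exact mul_left_cancel₀ hw0 hw
      rw [hkw, mul_inv_cancel₀ hhw]
  · filter_upwards [hright] with u hu
    rcases eq_or_ne u 0 with rfl | hu0
    · simp [hk0, h0]
    · rw [div_inv_eq_mul, ← hgk]
      have hhu : h (g u) ≠ 0 := fun h' ↦ hu0 (by simpa [h'] using hu.symm)
      have hku : k u = h (g u) := by
        rw [div_eq_iff hhu, hgk] at hu
        simpa only [hgk] using mul_left_cancel₀ hu0 hu
      rw [hku, inv_mul_cancel₀ hhu]

end Reversion

lemma exists_real_hasFPowerSeriesAt {f : ℂ → ℂ} {x : ℝ} (hf : AnalyticAt ℂ f x)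
    (hconj : ∀ᶠ z in 𝓝 (x : ℂ), f (conj z) = conj (f z)) :
    ∃ b : ℕ → ℝ, HasFPowerSeriesAt f (.ofScalars ℂ fun n ↦ (b n : ℂ)) x := by
  obtain ⟨p, hp⟩ := hf
  have hp_conj : HasFPowerSeriesAt f (.ofScalars ℂ fun n ↦ conj (p.coeff n)) x := by
    have hx : Tendsto (conj : ℂ → ℂ) (𝓝 x) (𝓝 x) := by
      simpa using Complex.continuous_conj.tendsto (x : ℂ)
    rw [hasFPowerSeriesAt_iff'] at hp ⊢
    filter_upwards [hx.eventually hp, hconj] with z hz hfz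
    simpa [hfz] using Complex.hasSum_conj'.2 hz
  have hreal (n : ℕ) : ∃ r : ℝ, p.coeff n = r := by
    rw [← Complex.conj_eq_iff_real]
    simpa using (congrArg (·.coeff n) (hp.eq_formalMultilinearSeries hp_conj)).symm
  choose b hb using hreal
  exact ⟨b, by simpa [hasFPowerSeriesAt_iff', hb] using hp⟩

/-- The sum of the Laurent series at infinity `∑ b n * q ^ (1 - n)`, whose leading term is
`b 0 * q`. -/
noncomputable def laurentSum (b : ℕ → ℝ) (q : ℂ) : ℂ :=
  ∑' n : ℕ, (b n : ℂ) * q ^ (1 - (n : ℤ))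

lemma laurentTerm_eq (b : ℕ → ℝ) {q : ℂ} (hq : q ≠ 0) (n : ℕ) :
    (b n : ℂ) * q ^ (1 - (n : ℤ)) = q * (b n * q⁻¹ ^ n) := by
  rw [zpow_sub₀ hq, zpow_one, zpow_natCast, inv_pow]
  ring

lemma eventually_summable_and_laurentSum_eq {m : ℂ → ℂ} {b : ℕ → ℝ}
    (hm : HasFPowerSeriesAt m (.ofScalars ℂ fun n ↦ (b n : ℂ)) 0) :
    ∀ᶠ q in cobounded ℂ, Summable (fun n : ℕ ↦ ‖(b n : ℂ) * q ^ (1 - (n : ℤ))‖) ∧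
      laurentSum b q = q * m q⁻¹ := by
  have hsum : ∀ᶠ u in 𝓝 (0 : ℂ), HasSum (fun n ↦ (b n : ℂ) * u ^ n) (m u) := by
    simpa [hasFPowerSeriesAt_iff, mul_comm] using hm
  filter_upwards [tendsto_inv₀_cobounded.eventually hsum, eventually_ne_cobounded 0] with q hq hq0
  have hsum_q : HasSum (fun n : ℕ ↦ (b n : ℂ) * q ^ (1 - (n : ℤ))) (q * m q⁻¹) := by
    simpa only [laurentTerm_eq b hq0] using hq.mul_left q
  exact ⟨hsum_q.summable.norm, hsum_q.tsum_eq⟩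

lemma tendsto_mul_apply_inv_cobounded {𝕜 : Type*} [NormedDivisionRing 𝕜] {h : 𝕜 → 𝕜}
    (hh : ContinuousAt h 0) (h0 : h 0 ≠ 0) :
    Tendsto (fun z ↦ z * h z⁻¹) (cobounded 𝕜) (cobounded 𝕜) := by
  rw [← tendsto_norm_atTop_iff_cobounded]
  simpa only [norm_mul, Function.comp_apply] using
    tendsto_norm_cobounded_atTop.atTop_mul_pos (norm_pos_iff.2 h0)
      (hh.tendsto.comp tendsto_inv₀_cobounded).norm

lemma exists_laurentSum_inverse {h : ℂ → ℂ} (hh : AnalyticAt ℂ h 0) (h0 : h 0 ≠ 0)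
    (hconj : ∀ᶠ w in 𝓝 0, h (conj w) = conj (h w)) :
    ∃ b : ℕ → ℝ, (b 0 : ℂ) = (h 0)⁻¹ ∧
      (∀ᶠ q in cobounded ℂ, Summable (fun n : ℕ ↦ ‖(b n : ℂ) * q ^ (1 - (n : ℤ))‖) ∧
        laurentSum b q * h (laurentSum b q)⁻¹ = q) ∧
      ∀ᶠ z in cobounded ℂ, laurentSum b (z * h z⁻¹) = z := by
  obtain ⟨m, hma, hm⟩ := exists_isReversionPair hh h0
  obtain ⟨b, hb⟩ := exists_real_hasFPowerSeriesAt (x := 0) (by simpa using hma)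
    (by simpa using hm.eventually_map_comm hma.continuousAt Complex.continuous_conj hconj)
  rw [Complex.ofReal_zero] at hb
  have hseries := eventually_summable_and_laurentSum_eq hb
  refine ⟨b, ?_, ?_, ?_⟩
  · have hb0 : (b 0 : ℂ) = m 0 := by simpa using hb.coeff_zero 0
    rw [hb0, eq_inv_of_mul_eq_one_right hm.mul_apply_zero]
  · filter_upwards [hseries, tendsto_inv₀_cobounded.eventually hm.right] with q ⟨hsum, hq⟩ hmq
    refine ⟨hsum, ?_⟩
    rw [hq, mul_inv, ← div_eq_mul_inv, mul_assoc, hmq, mul_one]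
  · filter_upwards [(tendsto_mul_apply_inv_cobounded hh.continuousAt h0).eventually hseries,
      tendsto_inv₀_cobounded.eventually hm.left] with z ⟨_, hz⟩ hmz
    rw [hz, mul_inv, ← div_eq_mul_inv, mul_assoc, hmz, mul_one]

lemma exists_pos_forall_lt_of_eventually {E : Type*} [SeminormedAddGroup E] {P : E → Prop}
    {Q : ℝ → Prop} (hP : ∀ᶠ x in cobounded E, P x) (hQ : ∀ᶠ r in atTop, Q r) :
    ∃ R > 0, (∀ x, R < ‖x‖ → P x) ∧ ∀ r, R < r → Q r := by
  obtain ⟨R₁, -, hR₁⟩ := hasBasis_cobounded_norm.eventually_iff.1 hP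
  obtain ⟨R₂, hR₂⟩ := eventually_atTop.1 hQ
  refine ⟨max 1 (max R₁ R₂), by positivity, fun x hx ↦ hR₁ ?_, fun r hr ↦ hR₂ r ?_⟩
  · exact (le_max_left R₁ R₂).trans ((le_max_right 1 _).trans hx.le)
  · exact (le_max_right R₁ R₂).trans ((le_max_right 1 _).trans hr.le)

section LaplaceExponent

variable (A : ℝ) (N Nh : ℕ) (aa ρ ah ρh : ℕ → ℝ)

/-- The function `w ↦ w * ψ w⁻¹` for `σ = 0`, written so as to be defined at `w = 0`, the point
at infinity of `ψ`. -/
noncomputable def psiAtInfinity (w : ℂ) : ℂ :=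
  A + ∑ ℓ ∈ Finset.Icc 1 N, aa ℓ * w / (ρ ℓ * w - 1)
    - ∑ ℓ ∈ Finset.Icc 1 Nh, ah ℓ * w / (ρh ℓ * w + 1)

lemma psiAtInfinity_zero : psiAtInfinity A N Nh aa ρ ah ρh 0 = A := by
  simp [psiAtInfinity]

lemma psiAtInfinity_conj (w : ℂ) :
    psiAtInfinity A N Nh aa ρ ah ρh (conj w) = conj (psiAtInfinity A N Nh aa ρ ah ρh w) := by
  simp [psiAtInfinity]

lemma analyticAt_psiAtInfinity : AnalyticAt ℂ (psiAtInfinity A N Nh aa ρ ah ρh) 0 := by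
  unfold psiAtInfinity
  fun_prop (disch := simp)

lemma psi_eq_mul_psiAtInfinity (z : ℂ) :
    psi 0 A N Nh aa ρ ah ρh z = z * psiAtInfinity A N Nh aa ρ ah ρh z⁻¹ := by
  rcases eq_or_ne z 0 with rfl | hz
  · simp [psi]
  have hterm (c d : ℂ) : c * z⁻¹ / (d * z⁻¹ - 1) = c / (d - z) := by
    rw [← mul_div_mul_right c (d - z) (inv_ne_zero hz), sub_mul, mul_inv_cancel₀ hz]
  have hterm' (c d : ℂ) : c * z⁻¹ / (d * z⁻¹ + 1) = c / (d + z) := by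
    rw [← mul_div_mul_right c (d + z) (inv_ne_zero hz), add_mul, mul_inv_cancel₀ hz]
  simp only [psi, psiAtInfinity, hterm, hterm', Complex.ofReal_zero]
  ring

lemma psi_neg (z : ℂ) :
    psi 0 A N Nh aa ρ ah ρh (-z) = psi 0 (-A) Nh N ah ρh aa ρ z := by
  simp only [psi, sub_neg_eq_add, ← sub_eq_add_neg, Complex.ofReal_neg]
  ring

lemma psi_ofReal (x : ℝ) :
    psi 0 A N Nh aa ρ ah ρh x =
      ((A * x + x * ∑ ℓ ∈ Finset.Icc 1 N, aa ℓ / (ρ ℓ - x)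
        - x * ∑ ℓ ∈ Finset.Icc 1 Nh, ah ℓ / (ρh ℓ + x) : ℝ) : ℂ) := by
  simp [psi]

variable {A N Nh aa ρ ah ρh}

lemma re_psi_ofReal_le_mul {x : ℝ} (hx : 0 ≤ x)
    (haa : ∀ ℓ ∈ Finset.Icc 1 N, 0 ≤ aa ℓ) (hah : ∀ ℓ ∈ Finset.Icc 1 Nh, 0 ≤ ah ℓ)
    (hρ : ∀ ℓ ∈ Finset.Icc 1 N, ρ ℓ ≤ x) (hρh : ∀ ℓ ∈ Finset.Icc 1 Nh, 0 ≤ ρh ℓ) :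
    (psi 0 A N Nh aa ρ ah ρh x).re ≤ A * x := by
  have hsum : ∑ ℓ ∈ Finset.Icc 1 N, aa ℓ / (ρ ℓ - x) ≤ 0 := Finset.sum_nonpos fun ℓ hℓ ↦
    div_nonpos_of_nonneg_of_nonpos (haa ℓ hℓ) (sub_nonpos.2 (hρ ℓ hℓ))
  have hsumh : 0 ≤ ∑ ℓ ∈ Finset.Icc 1 Nh, ah ℓ / (ρh ℓ + x) := Finset.sum_nonneg fun ℓ hℓ ↦
    div_nonneg (hah ℓ hℓ) (add_nonneg (hρh ℓ hℓ) hx)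
  rw [psi_ofReal, Complex.ofReal_re]
  linarith [mul_nonpos_of_nonneg_of_nonpos hx hsum, mul_nonneg hx hsumh]

lemma tendsto_atTop_of_psi_eq (hA : 0 < A)
    (haa : ∀ ℓ ∈ Finset.Icc 1 N, 0 ≤ aa ℓ) (hah : ∀ ℓ ∈ Finset.Icc 1 Nh, 0 ≤ ah ℓ)
    (hρ0 : 0 ≤ ρ 0) (hρh0 : 0 ≤ ρh 0)
    (hρ : MonotoneOn ρ (Set.Iic N)) (hρh : MonotoneOn ρh (Set.Iic Nh)) {ζ : ℝ → ℝ}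
    (hζ : ∀ᶠ q : ℝ in atTop, ρ N ≤ ζ q ∧ psi 0 A N Nh aa ρ ah ρh (ζ q) = q) :
    Tendsto ζ atTop atTop := by
  refine tendsto_atTop_mono' _ ?_ (tendsto_id.atTop_div_const hA)
  filter_upwards [hζ] with q ⟨hle, hψ⟩
  have hζ0 : 0 ≤ ζ q := (hρ0.trans (hρ N.zero_le Set.self_mem_Iic N.zero_le)).trans hle
  have hbound : q ≤ A * ζ q := by
    simpa [hψ] using re_psi_ofReal_le_mul (A := A) hζ0 haa hah
      (fun ℓ hℓ ↦ (hρ (Finset.mem_Icc.1 hℓ).2 Set.self_mem_Iic (Finset.mem_Icc.1 hℓ).2).trans hle)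
      (fun ℓ hℓ ↦ hρh0.trans (hρh Nh.zero_le (Finset.mem_Icc.1 hℓ).2 ℓ.zero_le))
  exact (div_le_iff₀' hA).2 hbound

lemma exists_laurentSum_eq_root (hA : A ≠ 0) {ζ : ℝ → ℂ} (hζ : Tendsto ζ atTop (cobounded ℂ))
    (hψ : ∀ᶠ q : ℝ in atTop, psi 0 A N Nh aa ρ ah ρh (ζ q) = q) :
    ∃ R > 0, ∃ b : ℕ → ℝ, b 0 = 1 / A ∧
      (∀ q : ℂ, R < ‖q‖ → Summable (fun n : ℕ ↦ ‖(b n : ℂ) * q ^ (1 - (n : ℤ))‖) ∧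
        psi 0 A N Nh aa ρ ah ρh (laurentSum b q) = q) ∧
      ∀ q : ℝ, R < q → laurentSum b q = ζ q := by
  obtain ⟨b, hb0, hseries, hunique⟩ := exists_laurentSum_inverse
    (analyticAt_psiAtInfinity A N Nh aa ρ ah ρh) (by simpa [psiAtInfinity_zero] using hA)
    (.of_forall (psiAtInfinity_conj A N Nh aa ρ ah ρh))
  simp only [← psi_eq_mul_psiAtInfinity] at hseries hunique
  have hroot : ∀ᶠ q : ℝ in atTop, laurentSum b q = ζ q := by
    filter_upwards [hζ.eventually hunique, hψ] with q hq hψq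
    rwa [hψq] at hq
  obtain ⟨R, hR, hR_series, hR_root⟩ := exists_pos_forall_lt_of_eventually hseries hroot
  refine ⟨R, hR, b, ?_, hR_series, hR_root⟩
  rw [psiAtInfinity_zero] at hb0
  rw [one_div]
  exact_mod_cast hb0

end LaplaceExponent

/-- For `σ = 0`, `a ≠ 0`, the extra solution of `ψ = q` (namely `ζ_{N+1}` when `a > 0`,
`-ζ̂_{N̂+1}` when `a < 0`) admits a convergent expansion in powers of `q^{-1}` with leading
coefficient `b_{-1} = 1/a`.  Here `b n` denotes the paper's `b_{n-1}`, so the series is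
`∑_{n≥0} b n · q^{1-n}`. -/
theorem extra_root_series_sigma_zero
    (σ A : ℝ) (N Nh : ℕ) (aa ρ ah ρh : ℕ → ℝ)
    (hσ : σ = 0)
    (hpos : ∀ ℓ ∈ Finset.Icc 1 N, 0 < aa ℓ)
    (hposh : ∀ ℓ ∈ Finset.Icc 1 Nh, 0 < ah ℓ)
    (hρ0 : ρ 0 = 0) (hρh0 : ρh 0 = 0)
    (hmono : ∀ i j, i < j → j ≤ N → ρ i < ρ j)
    (hmonoh : ∀ i j, i < j → j ≤ Nh → ρh i < ρh j)
    (ζM ζhM : ℝ → ℝ)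
    (hζM : 0 < A → ∀ q : ℝ, 0 < q → ρ N < ζM q ∧
        psi σ A N Nh aa ρ ah ρh (ζM q : ℂ) = (q : ℂ))
    (hζhM : A < 0 → ∀ q : ℝ, 0 < q → ρh Nh < ζhM q ∧
        psi σ A N Nh aa ρ ah ρh (-(ζhM q : ℝ) : ℂ) = (q : ℂ)) :
    (0 < A →
      ∃ R > (0 : ℝ), ∃ b : ℕ → ℝ, b 0 = 1 / A ∧
        (∀ q : ℂ, R < ‖q‖ →
          Summable (fun n : ℕ => ‖(b n : ℂ) * q ^ (1 - (n : ℤ))‖) ∧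
          psi σ A N Nh aa ρ ah ρh (∑' n : ℕ, (b n : ℂ) * q ^ (1 - (n : ℤ))) = q) ∧
        (∀ q : ℝ, R < q →
          (∑' n : ℕ, (b n : ℂ) * (q : ℂ) ^ (1 - (n : ℤ))) = (ζM q : ℂ))) ∧
    (A < 0 →
      ∃ R > (0 : ℝ), ∃ b : ℕ → ℝ, b 0 = 1 / A ∧
        (∀ q : ℂ, R < ‖q‖ →
          Summable (fun n : ℕ => ‖(b n : ℂ) * q ^ (1 - (n : ℤ))‖) ∧
          psi σ A N Nh aa ρ ah ρh (∑' n : ℕ, (b n : ℂ) * q ^ (1 - (n : ℤ))) = q) ∧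
        (∀ q : ℝ, R < q →
          (∑' n : ℕ, (b n : ℂ) * (q : ℂ) ^ (1 - (n : ℤ))) = (-(ζhM q : ℝ) : ℂ))) := by
  subst hσ
  have haa ℓ hℓ := (hpos ℓ hℓ).le
  have hah ℓ hℓ := (hposh ℓ hℓ).le
  have hρ : StrictMonoOn ρ (Set.Iic N) := fun i _ j hj hij ↦ hmono i j hij hj
  have hρh : StrictMonoOn ρh (Set.Iic Nh) := fun i _ j hj hij ↦ hmonoh i j hij hj
  refine ⟨fun hA ↦ ?_, fun hA ↦ ?_⟩
  · have hroot := (eventually_gt_atTop 0).mono (hζM hA)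
    have hζ : Tendsto ζM atTop atTop := tendsto_atTop_of_psi_eq hA haa hah hρ0.ge hρh0.ge
      hρ.monotoneOn hρh.monotoneOn (hroot.mono fun _ h ↦ ⟨h.1.le, h.2⟩)
    exact exists_laurentSum_eq_root hA.ne'
      ((RCLike.tendsto_ofReal_atTop_cobounded ℂ).comp hζ) (hroot.mono fun _ h ↦ h.2)
  · have hroot := (eventually_gt_atTop 0).mono (hζhM hA)
    have hζ : Tendsto ζhM atTop atTop := tendsto_atTop_of_psi_eq (neg_pos.2 hA) hah haa
      hρh0.ge hρ0.ge hρh.monotoneOn hρ.monotoneOn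
      (hroot.mono fun _ h ↦ ⟨h.1.le, psi_neg A N Nh aa ρ ah ρh _ ▸ h.2⟩)
    exact exists_laurentSum_eq_root hA.ne
      (tendsto_neg_cobounded.comp ((RCLike.tendsto_ofReal_atTop_cobounded ℂ).comp hζ))
      (hroot.mono fun _ h ↦ h.2)
end

section
/- Let f : [0,∞) → ℂ be continuous, let k ∈ {1, 2}, let j ≥ 0 be an integer, let R ≥ 0, and let (a_n)_{n≥k+j} be complex numbers such that the series ∑_{n=k+j}^∞ a_n z^{−n/k} converges for every z ∈ ℂ with |z| > R (principal branch of the square root when k = 2), and such that for every z ∈ ℂ with Re z > R the Laplace transform ∫_0^∞ e^{−zt} f(t) dt exists and equals ∑_{n=k+j}^∞ a_n z^{−n/k}. Then for every t ≥ 0, f(t) = ∑_{n=j}^∞ a_{n+k} · t^{n/k}/Γ(n/k + 1), and this series converges for every t ∈ ℂ. -/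
/-!
A series `∑ bᵢ x ^ (-(sᵢ + 1))` that converges absolutely at one `σ > 0` is, for real `x > σ`, the
Laplace transform of `g(t) = ∑ (t ^ sᵢ / Γ(sᵢ + 1)) bᵢ`. Indeed `u ^ s e ^ (-u) ≤ Γ(s + 1)`, by
comparing Euler's integral with its part over `(u, ∞)`; rescaling gives
`t ^ s / Γ(s + 1) ≤ e ^ (σ t) σ ^ (-s)`, so `g` is continuous, of exponential order `σ`.
It remains to see that a continuous function is determined by its Laplace transform on a real ray:
the transform is holomorphic, hence determined on a half-plane, and its restriction to a vertical
line is the Fourier transform of an exponentially damped function, which Fourier inversion recovers.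
-/

open MeasureTheory Set Filter Topology
open scoped FourierTransform

section LaplaceTransform

variable {E : Type*} [NormedAddCommGroup E] [NormedSpace ℂ E] {f g : ℝ → E} {z w : ℂ} {σ : ℝ}

/-- The Laplace integral of `f` at `z` converges absolutely; compare `MellinConvergent`. -/
def LaplaceConvergent (f : ℝ → E) (z : ℂ) : Prop :=
  IntegrableOn (fun t : ℝ => Complex.exp (-z * t) • f t) (Ioi 0)

/-- The Laplace transform of `f` at `z`, with junk value `0` unless `LaplaceConvergent f z`. -/
noncomputable def laplace (f : ℝ → E) (z : ℂ) : E :=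
  ∫ t in Ioi (0 : ℝ), Complex.exp (-z * t) • f t

theorem norm_exp_neg_mul_ofReal (z : ℂ) (t : ℝ) :
    ‖Complex.exp (-z * t)‖ = Real.exp (-z.re * t) := by
  simp [Complex.norm_exp]

theorem LaplaceConvergent.sub (hf : LaplaceConvergent f z) (hg : LaplaceConvergent g z) :
    LaplaceConvergent (f - g) z := by
  simpa only [LaplaceConvergent, Pi.sub_apply, smul_sub] using! Integrable.sub hf hg

theorem laplace_sub (hf : LaplaceConvergent f z) (hg : LaplaceConvergent g z) :
    laplace (f - g) z = laplace f z - laplace g z := by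
  simpa only [laplace, Pi.sub_apply, smul_sub] using integral_sub hf hg

theorem LaplaceConvergent.aestronglyMeasurable (hf : LaplaceConvergent f z) (w : ℂ) :
    AEStronglyMeasurable (fun t : ℝ => Complex.exp (-w * t) • f t)
      (volume.restrict (Ioi 0)) := by
  have hshift : (fun t : ℝ => Complex.exp (-w * t) • f t) =
      fun t : ℝ => Complex.exp ((z - w) * t) • Complex.exp (-z * t) • f t := by
    ext t
    rw [smul_smul, ← Complex.exp_add]
    ring_nf
  rw [hshift]
  exact (by fun_prop : AEStronglyMeasurable (fun t : ℝ => Complex.exp ((z - w) * t)) _).smul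
    (Integrable.aestronglyMeasurable hf)

theorem LaplaceConvergent.of_re_le (hf : LaplaceConvergent f z) (hzw : z.re ≤ w.re) :
    LaplaceConvergent f w := by
  refine Integrable.mono hf (hf.aestronglyMeasurable w) ?_
  filter_upwards [ae_restrict_mem measurableSet_Ioi] with t ht
  have ht : 0 < t := ht
  simp only [norm_smul, norm_exp_neg_mul_ofReal]
  gcongr

theorem LaplaceConvergent.of_norm_le_exp {C : ℝ}
    (hf : AEStronglyMeasurable f (volume.restrict (Ioi 0)))
    (hC : ∀ t > 0, ‖f t‖ ≤ C * Real.exp (σ * t)) (hz : σ < z.re) : LaplaceConvergent f z := by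
  have hmajorant : IntegrableOn (fun t : ℝ => C * Real.exp ((σ - z.re) * t)) (Ioi 0) :=
    (integrableOn_exp_mul_Ioi (sub_neg.2 hz) 0).const_mul C
  refine Integrable.mono' hmajorant
    ((by fun_prop : AEStronglyMeasurable (fun t : ℝ => Complex.exp (-z * t)) _).smul hf) ?_
  filter_upwards [ae_restrict_mem measurableSet_Ioi] with t ht
  calc ‖Complex.exp (-z * t) • f t‖
      ≤ Real.exp (-z.re * t) * (C * Real.exp (σ * t)) := by
        rw [norm_smul, norm_exp_neg_mul_ofReal]
        gcongr
        exact hC t ht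
    _ = C * Real.exp ((σ - z.re) * t) := by
        rw [mul_left_comm, ← Real.exp_add]
        ring_nf

theorem mul_exp_neg_mul_le {δ x y t : ℝ} (hδ : 0 < δ) (hxy : y + δ ≤ x) (ht : 0 ≤ t) :
    t * Real.exp (-x * t) ≤ δ⁻¹ * Real.exp (-y * t) := by
  have hlinear : t ≤ δ⁻¹ * Real.exp (δ * t) := by
    rw [← div_eq_inv_mul, le_div_iff₀ hδ]
    linarith [Real.add_one_le_exp (δ * t)]
  calc t * Real.exp (-x * t)
      ≤ δ⁻¹ * Real.exp (δ * t) * Real.exp (-(y + δ) * t) := by gcongr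
    _ = δ⁻¹ * Real.exp (-y * t) := by
        rw [mul_assoc, ← Real.exp_add]
        ring_nf

theorem hasDerivAt_laplace (hf : LaplaceConvergent f w) (hz : w.re < z.re) :
    HasDerivAt (laplace f) (laplace (fun t => -(t : ℂ) • f t) z) z := by
  obtain ⟨δ, hδ, hδz⟩ : ∃ δ > 0, w.re + 2 * δ = z.re := ⟨(z.re - w.re) / 2, by linarith, by ring⟩
  have hball : ∀ y ∈ Metric.ball z δ, w.re + δ ≤ y.re := by
    intro y hy
    have hre := (Complex.abs_re_le_norm (y - z)).trans (mem_ball_iff_norm.1 hy).le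
    rw [Complex.sub_re, abs_le] at hre
    linarith [hre.1]
  refine (hasDerivAt_integral_of_dominated_loc_of_deriv_le
    (F := fun z (t : ℝ) => Complex.exp (-z * t) • f t)
    (F' := fun z (t : ℝ) => Complex.exp (-z * t) • -(t : ℂ) • f t)
    (bound := fun t : ℝ => δ⁻¹ * ‖Complex.exp (-w * t) • f t‖) (Metric.ball_mem_nhds z hδ)
    (.of_forall hf.aestronglyMeasurable) (hf.of_re_le hz.le) ?_ ?_
    (hf.norm.const_mul _) ?_).2
  · simp_rw [smul_comm _ (-_ : ℂ)]
    exact (by fun_prop : AEStronglyMeasurable (fun t : ℝ => -(t : ℂ)) _).smul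
      (hf.aestronglyMeasurable z)
  · filter_upwards [ae_restrict_mem measurableSet_Ioi] with t (ht : 0 < t) y hy
    simp only [norm_smul, norm_exp_neg_mul_ofReal, norm_neg, Complex.norm_real,
      Real.norm_of_nonneg ht.le, ← mul_assoc]
    rw [mul_comm _ t]
    exact mul_le_mul_of_nonneg_right (mul_exp_neg_mul_le hδ (hball y hy) ht.le) (norm_nonneg _)
  · refine .of_forall fun t y _ => ?_
    have hexp : HasDerivAt (fun y : ℂ => Complex.exp (-y * t)) (Complex.exp (-y * t) * -t) y := by
      simpa using ((hasDerivAt_id y).neg.mul_const (t : ℂ)).cexp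
    simpa only [smul_smul] using hexp.smul_const (f t)

theorem fourier_indicator_exp_neg_mul_smul (f : ℝ → E) (z : ℂ) (ξ : ℝ) :
    𝓕 ((Ioi 0).indicator fun t : ℝ => Complex.exp (-z * t) • f t) ξ =
      laplace f (z + 2 * Real.pi * ξ * Complex.I) := by
  rw [Real.fourier_real_eq_integral_exp_smul, laplace, ← integral_indicator measurableSet_Ioi]
  congr 1 with t
  by_cases ht : t ∈ Ioi 0
  · simp only [indicator_of_mem ht, smul_smul, ← Complex.exp_add]
    push_cast
    ring_nf
  · simp only [indicator_of_notMem ht, smul_zero]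

variable [CompleteSpace E]

theorem eq_zero_of_laplace_eq_zero_of_re_eq {t : ℝ} (hf : LaplaceConvergent f z)
    (hzero : ∀ w : ℂ, w.re = z.re → laplace f w = 0) (ht : 0 < t) (hft : ContinuousAt f t) :
    f t = 0 := by
  let F : ℝ → E := (Ioi 0).indicator fun u : ℝ => Complex.exp (-z * u) • f u
  have hFint : Integrable F := (integrable_indicator_iff measurableSet_Ioi).2 hf
  have hfourier : 𝓕 F = 0 := by
    ext ξ
    rw [fourier_indicator_exp_neg_mul_smul]
    exact hzero _ (by simp)
  have hFt : F =ᶠ[𝓝 t] fun u => Complex.exp (-z * u) • f u :=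
    eqOn_indicator.eventuallyEq_of_mem (Ioi_mem_nhds ht)
  have hFcont : ContinuousAt F t :=
    (ContinuousAt.smul (by fun_prop) hft).congr hFt.symm
  have hinv : 𝓕⁻ (𝓕 F) t = F t :=
    hFint.fourierInv_fourier_eq (hfourier ▸ integrable_zero _ _ _) hFcont
  simp only [hfourier, Real.fourierInv_eq, Pi.zero_apply, smul_zero, integral_zero,
    hFt.eq_of_nhds] at hinv
  exact (smul_eq_zero.1 hinv.symm).resolve_left (Complex.exp_ne_zero _)

theorem laplace_eq_zero_of_forall_ofReal (hf : LaplaceConvergent f σ)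
    (hzero : ∀ x : ℝ, σ < x → laplace f x = 0) (hz : σ < z.re) : laplace f z = 0 := by
  have hopen : IsOpen {z : ℂ | σ < z.re} := isOpen_lt continuous_const Complex.continuous_re
  have han : AnalyticOnNhd ℂ (laplace f) {z : ℂ | σ < z.re} :=
    DifferentiableOn.analyticOnNhd (fun y hy =>
      (hasDerivAt_laplace hf hy).differentiableAt.differentiableWithinAt) hopen
  have hray : Tendsto ((↑) : ℝ → ℂ) (𝓝[>] z.re) (𝓝[≠] (z.re : ℂ)) :=
    Complex.continuous_ofReal.continuousWithinAt.tendsto_nhdsWithin fun x hx =>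
      Complex.ofReal_injective.ne (ne_of_gt hx)
  refine han.eqOn_zero_of_preconnected_of_frequently_eq_zero
    (convex_halfSpace_re_gt σ).isPreconnected (z₀ := (z.re : ℂ)) hz (hray.frequently ?_) hz
  refine Eventually.frequently ?_
  filter_upwards [self_mem_nhdsWithin] with x hx
  exact hzero x (hz.trans hx)

theorem eqOn_Ici_of_laplace_eq (hf : ContinuousOn f (Ici 0)) (hg : ContinuousOn g (Ici 0))
    (hfσ : LaplaceConvergent f σ) (hgσ : LaplaceConvergent g σ)
    (hfg : ∀ x : ℝ, σ < x → laplace f x = laplace g x) : EqOn f g (Ici 0) := by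
  have hconv : ∀ z : ℂ, σ ≤ z.re → LaplaceConvergent f z ∧ LaplaceConvergent g z :=
    fun z hz => ⟨hfσ.of_re_le hz, hgσ.of_re_le hz⟩
  have hzero : ∀ z : ℂ, σ < z.re → laplace (f - g) z = 0 := by
    refine fun z hz => laplace_eq_zero_of_forall_ofReal (hfσ.sub hgσ) (fun x hx => ?_) hz
    obtain ⟨hfx, hgx⟩ := hconv x hx.le
    rw [laplace_sub hfx hgx, hfg x hx, sub_self]
  have hpos : EqOn f g (Ioi 0) := by
    intro t ht
    obtain ⟨hfx, hgx⟩ := hconv (σ + 1) (by simp)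
    refine sub_eq_zero.1 (eq_zero_of_laplace_eq_zero_of_re_eq (hfx.sub hgx)
      (fun w hw => hzero w (by simp [hw])) ht ?_)
    exact (hf.sub hg).continuousAt (Ici_mem_nhds ht)
  exact hpos.of_subset_closure hf hg Ioi_subset_Ici_self (closure_Ioi (0 : ℝ)).ge

end LaplaceTransform

section NormalizedPower

variable {s σ t : ℝ}

theorem rpow_mul_exp_neg_le_Gamma_add_one (hs : 0 ≤ s) (ht : 0 ≤ t) :
    t ^ s * Real.exp (-t) ≤ Real.Gamma (s + 1) := by
  have hint : IntegrableOn (fun u : ℝ => Real.exp (-u) * u ^ s) (Ioi 0) := by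
    simpa using Real.GammaIntegral_convergent (s := s + 1) (by linarith)
  have htail : Ioi t ⊆ Ioi 0 := Ioi_subset_Ioi ht
  calc t ^ s * Real.exp (-t) = ∫ u in Ioi t, Real.exp (-u) * t ^ s := by
        rw [integral_mul_const, integral_exp_neg_Ioi, mul_comm]
    _ ≤ ∫ u in Ioi t, Real.exp (-u) * u ^ s := by
        refine setIntegral_mono_on ((integrableOn_exp_neg_Ioi t).mul_const _)
          (hint.mono_set htail) measurableSet_Ioi fun u hu => ?_
        have hu : t < u := hu
        gcongr
    _ ≤ ∫ u in Ioi 0, Real.exp (-u) * u ^ s := by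
        refine setIntegral_mono_set hint ?_ htail.eventuallyLE
        filter_upwards [ae_restrict_mem measurableSet_Ioi] with u (hu : 0 < u)
        exact mul_nonneg (Real.exp_nonneg _) (Real.rpow_nonneg hu.le s)
    _ = Real.Gamma (s + 1) := by
        simp [Real.Gamma_eq_integral (by linarith : 0 < s + 1)]

theorem rpow_div_Gamma_add_one_nonneg (hs : -1 < s) (ht : 0 ≤ t) :
    0 ≤ t ^ s / Real.Gamma (s + 1) :=
  div_nonneg (Real.rpow_nonneg ht s) (Real.Gamma_pos_of_pos (by linarith)).le

theorem rpow_div_Gamma_add_one_le (hs : 0 ≤ s) (hσ : 0 < σ) (ht : 0 ≤ t) :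
    t ^ s / Real.Gamma (s + 1) ≤ Real.exp (σ * t) * σ ^ (-s) := by
  have hrescaled := rpow_mul_exp_neg_le_Gamma_add_one hs (mul_nonneg hσ.le ht)
  rw [Real.mul_rpow hσ.le ht, Real.exp_neg, ← div_eq_mul_inv, div_le_iff₀ (Real.exp_pos _)]
    at hrescaled
  rw [Real.rpow_neg hσ.le, ← div_eq_mul_inv, div_le_div_iff₀ (by positivity) (by positivity)]
  linarith

theorem integrableOn_exp_neg_mul_mul_rpow_div_Gamma (hs : -1 < s) (hσ : 0 < σ) :
    IntegrableOn (fun t : ℝ => Real.exp (-σ * t) * (t ^ s / Real.Gamma (s + 1))) (Ioi 0) := by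
  have hrpow := integrableOn_rpow_mul_exp_neg_mul_rpow hs one_pos hσ
  simp only [Real.rpow_one] at hrpow
  simp_rw [← mul_div_assoc, mul_comm (Real.exp _)]
  exact hrpow.div_const _

theorem integral_exp_neg_mul_mul_rpow_div_Gamma (hs : -1 < s) (hσ : 0 < σ) :
    ∫ t in Ioi (0 : ℝ), Real.exp (-σ * t) * (t ^ s / Real.Gamma (s + 1)) = σ ^ (-(s + 1)) := by
  have hs' : 0 < s + 1 := by linarith
  have hGamma := Real.integral_rpow_mul_exp_neg_mul_Ioi hs' hσ
  simp only [add_sub_cancel_right, ← neg_mul] at hGamma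
  simp_rw [← mul_div_assoc, mul_comm (Real.exp _), integral_div, hGamma]
  rw [mul_div_cancel_right₀ _ (Real.Gamma_pos_of_pos hs').ne', one_div, Real.inv_rpow hσ.le,
    Real.rpow_neg hσ.le]

variable {E : Type*} [NormedAddCommGroup E] [NormedSpace ℂ E]

theorem exp_neg_mul_smul_rpow_div_Gamma_smul (c : E) :
    Complex.exp (-(σ : ℂ) * t) • (t ^ s / Real.Gamma (s + 1)) • c =
      (Real.exp (-σ * t) * (t ^ s / Real.Gamma (s + 1))) • c := by
  rw [mul_smul, ← Complex.coe_smul (Real.exp _)]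
  push_cast
  rfl

theorem laplaceConvergent_rpow_div_Gamma_smul (hs : -1 < s) (hσ : 0 < σ) (c : E) :
    LaplaceConvergent (fun t => (t ^ s / Real.Gamma (s + 1)) • c) σ := by
  simp_rw [LaplaceConvergent, exp_neg_mul_smul_rpow_div_Gamma_smul]
  exact (integrableOn_exp_neg_mul_mul_rpow_div_Gamma hs hσ).smul_const c

theorem laplace_rpow_div_Gamma_smul [CompleteSpace E] (hs : -1 < s) (hσ : 0 < σ) (c : E) :
    laplace (fun t => (t ^ s / Real.Gamma (s + 1)) • c) σ = σ ^ (-(s + 1)) • c := by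
  simp_rw [laplace, exp_neg_mul_smul_rpow_div_Gamma_smul, integral_smul_const,
    integral_exp_neg_mul_mul_rpow_div_Gamma hs hσ]

theorem integral_norm_exp_neg_mul_smul_rpow_div_Gamma_smul (hs : -1 < s) (hσ : 0 < σ) (c : E) :
    ∫ t in Ioi (0 : ℝ), ‖Complex.exp (-(σ : ℂ) * t) • (t ^ s / Real.Gamma (s + 1)) • c‖ =
      σ ^ (-(s + 1)) * ‖c‖ := by
  rw [← integral_exp_neg_mul_mul_rpow_div_Gamma hs hσ, ← integral_mul_const]
  refine setIntegral_congr_fun measurableSet_Ioi fun t (ht : 0 < t) => ?_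
  simp only [exp_neg_mul_smul_rpow_div_Gamma_smul, norm_smul]
  rw [Real.norm_of_nonneg (mul_nonneg (Real.exp_nonneg _) (rpow_div_Gamma_add_one_nonneg hs ht.le))]

end NormalizedPower

theorem summable_rpow_neg_add_one_mul_of_le {ι : Type*} {s c : ι → ℝ} {σ x : ℝ}
    (hs : ∀ i, 0 ≤ s i) (hc : ∀ i, 0 ≤ c i) (hσ : 0 < σ)
    (h : Summable fun i => σ ^ (-(s i + 1)) * c i) (hx : σ ≤ x) :
    Summable fun i => x ^ (-(s i + 1)) * c i :=
  .of_nonneg_of_le (fun i => mul_nonneg (Real.rpow_nonneg (hσ.le.trans hx) _) (hc i))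
    (fun i => mul_le_mul_of_nonneg_right
      (Real.rpow_le_rpow_of_nonpos hσ hx (by linarith [hs i])) (hc i)) h

section BorelTransform

variable {ι E : Type*} [NormedAddCommGroup E] [NormedSpace ℂ E]
  {b : ι → E} {s : ι → ℝ} {σ : ℝ}

/-- The Borel transform of the formal series `∑ bᵢ x ^ (-(sᵢ + 1))`, i.e. its termwise inverse
Laplace transform. -/
noncomputable def borelTransform (b : ι → E) (s : ι → ℝ) (t : ℝ) : E :=
  ∑' i, (t ^ s i / Real.Gamma (s i + 1)) • b i

theorem norm_rpow_div_Gamma_smul_le {s t : ℝ} (hs : 0 ≤ s) (hσ : 0 < σ) (ht : 0 ≤ t) (c : E) :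
    ‖(t ^ s / Real.Gamma (s + 1)) • c‖ ≤ σ ^ (-(s + 1)) * ‖c‖ * (σ * Real.exp (σ * t)) := by
  rw [norm_smul, Real.norm_of_nonneg (by positivity)]
  calc t ^ s / Real.Gamma (s + 1) * ‖c‖ ≤ Real.exp (σ * t) * σ ^ (-s) * ‖c‖ := by
        gcongr
        exact rpow_div_Gamma_add_one_le hs hσ ht
    _ = σ ^ (-(s + 1)) * ‖c‖ * (σ * Real.exp (σ * t)) := by
        rw [show -s = -(s + 1) + 1 by ring, Real.rpow_add_one hσ.ne']
        ring

theorem summable_norm_rpow_div_Gamma_smul (hs : ∀ i, 0 ≤ s i) (hσ : 0 < σ)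
    (hb : Summable fun i => σ ^ (-(s i + 1)) * ‖b i‖) {t : ℝ} (ht : 0 ≤ t) :
    Summable fun i => ‖(t ^ s i / Real.Gamma (s i + 1)) • b i‖ :=
  .of_nonneg_of_le (fun _ => norm_nonneg _)
    (fun i => norm_rpow_div_Gamma_smul_le (hs i) hσ ht (b i)) (hb.mul_right _)

theorem norm_borelTransform_le (hs : ∀ i, 0 ≤ s i) (hσ : 0 < σ)
    (hb : Summable fun i => σ ^ (-(s i + 1)) * ‖b i‖) {t : ℝ} (ht : 0 ≤ t) :
    ‖borelTransform b s t‖ ≤ (∑' i, σ ^ (-(s i + 1)) * ‖b i‖) * σ * Real.exp (σ * t) := by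
  rw [mul_assoc, ← tsum_mul_right]
  exact tsum_of_norm_bounded (hb.mul_right _).hasSum fun i =>
    norm_rpow_div_Gamma_smul_le (hs i) hσ ht (b i)

variable [CompleteSpace E]

theorem continuousOn_borelTransform (hs : ∀ i, 0 ≤ s i) (hσ : 0 < σ)
    (hb : Summable fun i => σ ^ (-(s i + 1)) * ‖b i‖) :
    ContinuousOn (borelTransform b s) (Ici 0) := by
  intro t (ht : 0 ≤ t)
  have hIcc : ContinuousOn (borelTransform b s) (Icc 0 (t + 1)) := by
    refine continuousOn_tsum (fun i => ?_) (hb.mul_right (σ * Real.exp (σ * (t + 1))))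
      fun i u hu => (norm_rpow_div_Gamma_smul_le (hs i) hσ hu.1 (b i)).trans ?_
    · exact (((Real.continuous_rpow_const (hs i)).div_const _).smul continuous_const).continuousOn
    · gcongr
      exact hu.2
  refine (hIcc t ⟨ht, by linarith⟩).mono_of_mem_nhdsWithin ?_
  rw [← Ici_inter_Iic]
  exact inter_mem_nhdsWithin _ (Iic_mem_nhds (by linarith))

theorem laplaceConvergent_borelTransform (hs : ∀ i, 0 ≤ s i) (hσ : 0 < σ)
    (hb : Summable fun i => σ ^ (-(s i + 1)) * ‖b i‖) {z : ℂ} (hz : σ < z.re) :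
    LaplaceConvergent (borelTransform b s) z :=
  .of_norm_le_exp (((continuousOn_borelTransform hs hσ hb).mono
      Ioi_subset_Ici_self).aestronglyMeasurable measurableSet_Ioi)
    (fun _ ht => norm_borelTransform_le hs hσ hb ht.le) hz

theorem laplace_borelTransform [Countable ι] (hs : ∀ i, 0 ≤ s i) (hσ : 0 < σ)
    (hb : Summable fun i => σ ^ (-(s i + 1)) * ‖b i‖) :
    laplace (borelTransform b s) σ = ∑' i, σ ^ (-(s i + 1)) • b i := by
  have hs' : ∀ i, -1 < s i := fun i => by linarith [hs i]
  calc laplace (borelTransform b s) σ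
      = ∫ t in Ioi (0 : ℝ), ∑' i,
          Complex.exp (-(σ : ℂ) * t) • (t ^ s i / Real.Gamma (s i + 1)) • b i := by
        refine setIntegral_congr_fun measurableSet_Ioi fun t (ht : 0 < t) => ?_
        exact ((summable_norm_rpow_div_Gamma_smul hs hσ hb ht.le).of_norm.tsum_const_smul _).symm
    _ = ∑' i, laplace (fun t => (t ^ s i / Real.Gamma (s i + 1)) • b i) σ := by
        refine (integral_tsum_of_summable_integral_norm
          (fun i => laplaceConvergent_rpow_div_Gamma_smul (hs' i) hσ (b i)) ?_).symm
        simpa only [integral_norm_exp_neg_mul_smul_rpow_div_Gamma_smul (hs' _) hσ] using hb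
    _ = ∑' i, σ ^ (-(s i + 1)) • b i :=
        tsum_congr fun i => laplace_rpow_div_Gamma_smul (hs' i) hσ (b i)

theorem summable_cpow_div_Gamma_smul (hs : ∀ i, 0 ≤ s i) (hσ : 0 < σ)
    (hb : Summable fun i => σ ^ (-(s i + 1)) * ‖b i‖) (t : ℂ) :
    Summable fun i => (t ^ (s i : ℂ) / (Real.Gamma (s i + 1) : ℂ)) • b i := by
  refine .of_norm ((summable_norm_rpow_div_Gamma_smul hs hσ hb (norm_nonneg t)).congr fun i => ?_)
  simp only [norm_smul, norm_div, Complex.norm_cpow_real, Complex.norm_real,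
    Real.norm_of_nonneg (Real.rpow_nonneg (norm_nonneg t) _)]

theorem laplace_series_termwise_inversion_general [Countable ι] {f : ℝ → E}
    (hf : ContinuousOn f (Ici 0)) (hs : ∀ i, 0 ≤ s i) (hσ : 0 < σ)
    (hb : Summable fun i => σ ^ (-(s i + 1)) * ‖b i‖) (hfσ : LaplaceConvergent f σ)
    (hlap : ∀ x : ℝ, σ < x → laplace f x = ∑' i, x ^ (-(s i + 1)) • b i) :
    (∀ t, 0 ≤ t → f t = borelTransform b s t) ∧
      ∀ t : ℂ, Summable fun i => (t ^ (s i : ℂ) / (Real.Gamma (s i + 1) : ℂ)) • b i := by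
  refine ⟨fun t ht => ?_, summable_cpow_div_Gamma_smul hs hσ hb⟩
  have hσ' : σ < ((σ + 1 : ℝ) : ℂ).re := by simp
  refine eqOn_Ici_of_laplace_eq hf (continuousOn_borelTransform hs hσ hb)
    (hfσ.of_re_le hσ'.le) (laplaceConvergent_borelTransform hs hσ hb hσ') (fun x hx => ?_) ht
  have hσx : σ < x := (lt_add_one σ).trans hx
  rw [hlap x hσx, laplace_borelTransform hs (hσ.trans hσx)
    (summable_rpow_neg_add_one_mul_of_le hs (fun i => norm_nonneg (b i)) hσ hb hσx.le)]

end BorelTransform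

theorem mul_cpow_neg_natCast_add_div {k : ℕ} (hk : k ≠ 0) (n : ℕ) {x : ℝ} (hx : 0 ≤ x) (c : ℂ) :
    c * (x : ℂ) ^ (-((n + k : ℕ) : ℂ) / k) = x ^ (-((n : ℝ) / k + 1)) • c := by
  rw [Complex.real_smul, mul_comm, Complex.ofReal_cpow hx]
  congr 2
  push_cast
  field_simp

/-- Termwise inversion of a Laplace transform given by a series in powers of `z^{-1/k}`,
`k ∈ {1,2}`: if `f` is continuous on `[0,∞)` and its Laplace transform equals
`∑_{n=k+j}^∞ a_n z^{-n/k}` for `Re z > R`, the series converging for `|z| > R`, then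
`f(t) = ∑_{n=j}^∞ a_{n+k} t^{n/k}/Γ(n/k + 1)`, the series converging for all `t ∈ ℂ`.
(The summation index `m` below corresponds to the paper's `n = m + j`.) -/
theorem laplace_series_termwise_inversion
    (f : ℝ → ℂ) (hf : ContinuousOn f (Set.Ici 0))
    (k : ℕ) (hk : k = 1 ∨ k = 2) (j : ℕ) (R : ℝ) (hR : 0 ≤ R)
    (a : ℕ → ℂ)
    (hconv : ∀ z : ℂ, R < ‖z‖ →
      Summable (fun m : ℕ => a (m + k + j) * z ^ (-(((m + k + j : ℕ) : ℂ)) / (k : ℂ))))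
    (hint : ∀ z : ℂ, R < z.re →
      MeasureTheory.IntegrableOn (fun t : ℝ => Complex.exp (-z * t) * f t) (Set.Ioi 0))
    (hlap : ∀ z : ℂ, R < z.re →
      (∫ t in Set.Ioi (0 : ℝ), Complex.exp (-z * t) * f t)
        = ∑' m : ℕ, a (m + k + j) * z ^ (-(((m + k + j : ℕ) : ℂ)) / (k : ℂ))) :
    (∀ t : ℝ, 0 ≤ t →
      f t = ∑' m : ℕ,
        a (m + j + k) * ((t ^ (((m + j : ℕ) : ℝ) / (k : ℝ)) : ℝ) : ℂ) /
          ((Real.Gamma (((m + j : ℕ) : ℝ) / (k : ℝ) + 1) : ℝ) : ℂ)) ∧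
    (∀ t : ℂ,
      Summable (fun m : ℕ =>
        a (m + j + k) * t ^ ((((m + j : ℕ) : ℂ)) / (k : ℂ)) /
          ((Real.Gamma (((m + j : ℕ) : ℝ) / (k : ℝ) + 1) : ℝ) : ℂ))) := by
  have hσ : R < R + 1 := lt_add_one R
  simp_rw [add_right_comm _ k j] at hconv hlap
  have hterm : ∀ x : ℝ, R < x → ∀ m : ℕ, a (m + j + k) * (x : ℂ) ^ (-((m + j + k : ℕ) : ℂ) / k) =
      x ^ (-(((m + j : ℕ) : ℝ) / k + 1)) • a (m + j + k) := fun x hx m =>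
    mul_cpow_neg_natCast_add_div (by omega) (m + j) (hR.trans hx.le) _
  have hsummable := (hconv (R + 1 : ℝ) (hσ.trans_le (Complex.re_le_norm ((R + 1 : ℝ) : ℂ)))).norm
  simp_rw [hterm _ hσ, norm_smul, Real.norm_of_nonneg (Real.rpow_nonneg (hR.trans hσ.le) _)]
    at hsummable
  obtain ⟨hinversion, hentire⟩ := laplace_series_termwise_inversion_general hf
    (fun m : ℕ => (by positivity : 0 ≤ ((m + j : ℕ) : ℝ) / k)) (hR.trans_lt hσ) hsummable
    (hint _ (by simp)) fun x hx => (hlap x (hσ.trans hx)).trans (tsum_congr (hterm x (hσ.trans hx)))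
  refine ⟨fun t ht => (hinversion t ht).trans (tsum_congr fun m => ?_), fun t => ?_⟩
  · rw [Complex.real_smul, Complex.ofReal_div, mul_comm, mul_div_assoc]
  · simpa [mul_comm, mul_div_assoc] using hentire t
end
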